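/- arXiv:1609.09796 — 3 statements merged into one kernel-verified Lean document; each statement's English description precedes it below -/
import Mathlib

section
/- Let q ≥ 1 and n ≥ 2q+4, and let D_{n,q} be the symmetric n×n 0–1 matrix with d(i,j) = 1 if q+2 ≤ |i−j| ≤ n−q−2 and d(i,j) = 0 otherwise. Then D_{n,q} is a (q+1)-Kalmanson matrix but not a q-Kalmanson matrix; in particular the class of q-Kalmanson matrices is a proper subclass of the class of (q+1)-Kalmanson matrices. -/
/-- Cyclic shift: the city `p` steps after position `i` in the circular order on `Fin n`. -/
def finShift {n : ℕ} (i : Fin n) (p : ℕ) : Fin n :=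
  ⟨(i.val + p) % n, Nat.mod_lt _ i.pos⟩

/-- The `q`-stripe TSP objective: `∑_{p=1}^{q} ∑_{i=1}^{n} d(π(i), π(i+p))`,
indices taken cyclically modulo `n`. -/
noncomputable def stripeObj (q : ℕ) {n : ℕ} (D : Fin n → Fin n → ℝ)
    (π : Equiv.Perm (Fin n)) : ℝ :=
  ∑ p ∈ Finset.Icc 1 q, ∑ i : Fin n, D (π i) (π (finShift i p))

/-- The fully crossing involution on `2q+2` points: `j ↦ j + (q+1) (mod 2q+2)`. -/
def crossShift (q : ℕ) (j : Fin (2*q+2)) : Fin (2*q+2) :=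
  ⟨(j.val + (q+1)) % (2*q+2), Nat.mod_lt _ (by omega)⟩

/-- A symmetric matrix `D` is `q`-Kalmanson if for every choice of `2q+2` indices
(in increasing order, via a strictly monotone `f`), the fully crossing matching has
maximum weight among all perfect matchings of these `2q+2` indices.  Perfect
matchings are encoded as fixed-point-free involutions `σ`; each matching weight is
counted twice in the sums below (once from each endpoint), which for symmetric `D`
is equivalent to comparing matching weights. -/
def qKalmanson (q : ℕ) {n : ℕ} (D : Fin n → Fin n → ℝ) : Prop :=
  ∀ f : Fin (2*q+2) → Fin n, StrictMono f →
    ∀ σ : Equiv.Perm (Fin (2*q+2)), (∀ j, σ (σ j) = j) → (∀ j, σ j ≠ j) →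
      ∑ j : Fin (2*q+2), D (f j) (f (σ j)) ≤ ∑ j : Fin (2*q+2), D (f j) (f (crossShift q j))


/-- The matrix `D_{n,q}` from Lemma 3.2: `d(i,j) = 1` if `q+2 ≤ |i−j| ≤ n−q−2`
and `d(i,j) = 0` otherwise (cities represented by `Fin n`). -/
noncomputable def Dnq (n q : ℕ) : Fin n → Fin n → ℝ := fun i j =>
  if q+2 ≤ max i.val j.val - min i.val j.val ∧ max i.val j.val - min i.val j.val ≤ n-q-2
  then 1 else 0

theorem crossShift_val (q : ℕ) (j : Fin (2*q+2)) :
    (j.val < q+1 ∧ (crossShift q j).val = j.val + (q+1)) ∨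
    (q+1 ≤ j.val ∧ (crossShift q j).val + (q+1) = j.val) := by
  have hj := j.isLt
  unfold crossShift
  rcases Nat.lt_or_ge j.val (q+1) with h | h
  · left
    exact ⟨h, Nat.mod_eq_of_lt (by omega)⟩
  · right
    refine ⟨h, ?_⟩
    show (j.val + (q+1)) % (2*q+2) + (q+1) = j.val
    rw [Nat.mod_eq_sub_mod (by omega), Nat.mod_eq_of_lt (by omega)]
    omega

theorem crossShift_invol (q : ℕ) : Function.Involutive (crossShift q) := by
  intro j
  apply Fin.ext
  have h1 := crossShift_val q j
  have h2 := crossShift_val q (crossShift q j)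
  omega

theorem strictMono_gap {m n : ℕ} (f : Fin m → Fin n) (hf : StrictMono f) (d : ℕ) :
    ∀ a b : Fin m, a.val + d = b.val → (f a).val + d ≤ (f b).val := by
  induction d with
  | zero =>
    intro a b h
    have : a = b := Fin.ext (by omega)
    subst this
    simp
  | succ d ih =>
    intro a b h
    have hb := b.isLt
    have h1 := ih a ⟨a.val + d, by omega⟩ rfl
    have h2 : f ⟨a.val + d, by omega⟩ < f b := hf (by rw [Fin.lt_def]; simp; omega)
    rw [Fin.lt_def] at h2
    omega

theorem Dnq_cross_one (q n : ℕ) (f : Fin (2*(q+1)+2) → Fin n) (hf : StrictMono f)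
    (a b : Fin (2*(q+1)+2)) (h : a.val + (q+2) = b.val) :
    q+2 ≤ (f b).val - (f a).val ∧ (f b).val - (f a).val ≤ n-q-2 ∧ (f a).val ≤ (f b).val := by
  have hb := b.isLt
  have h1 := strictMono_gap f hf (q+2) a b h
  have h2 := strictMono_gap f hf a.val ⟨0, by omega⟩ a (by simp)
  have h3 := strictMono_gap f hf (2*q+3 - b.val) b ⟨2*q+3, by omega⟩ (by simp; omega)
  have h4 := (f ⟨2*q+3, by omega⟩).isLt
  omega

/-- Lemma 3.2 (properness): for `q ≥ 1` and `n ≥ 2q+4`, the matrix `D_{n,q}` is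
`(q+1)`-Kalmanson but not `q`-Kalmanson; in particular the `q`-Kalmanson matrices
form a proper subclass of the `(q+1)`-Kalmanson matrices. -/
theorem Dnq_qKalmanson_proper (q n : ℕ) (hq : 1 ≤ q) (hn : 2*q+4 ≤ n) :
    qKalmanson (q+1) (Dnq n q) ∧ ¬ qKalmanson q (Dnq n q) := by
  constructor
  · intro f hf σ _ _
    apply Finset.sum_le_sum
    intro j _
    have h1 : Dnq n q (f j) (f (crossShift (q+1) j)) = 1 := by
      unfold Dnq
      rw [if_pos]
      rcases crossShift_val (q+1) j with ⟨_, h⟩ | ⟨_, h⟩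
      · obtain ⟨h1, h2, h3⟩ := Dnq_cross_one q n f hf j _ h.symm
        rw [max_eq_right h3, min_eq_left h3]
        exact ⟨h1, h2⟩
      · obtain ⟨h1, h2, h3⟩ := Dnq_cross_one q n f hf _ j h
        rw [max_eq_left h3, min_eq_right h3]
        exact ⟨h1, h2⟩
    rw [h1]
    unfold Dnq
    split_ifs <;> norm_num
  · intro H
    let c : Equiv.Perm (Fin (2*q+2)) := (crossShift_invol q).toPerm
    let s : Equiv.Perm (Fin (2*q+2)) :=
      Equiv.swap ⟨q+1, by omega⟩ ⟨q+2, by omega⟩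
    have hs : ∀ j, s (s j) = j := fun j => Equiv.swap_apply_self _ _ j
    have hc : ∀ j, c (c j) = j := crossShift_invol q
    have hcn : ∀ j, c j ≠ j := by
      intro j h
      have h1 := crossShift_val q j
      have h2 : crossShift q j = j := h
      rw [h2] at h1
      omega
    have key := H (Fin.castLE (by omega)) (Fin.strictMono_castLE _) (s * c * s)
      (by intro j; simp [hs, hc])
      (by
        intro j h
        apply hcn (s j)
        have := congrArg s h
        simpa [hs] using this)
    have h0 : ∑ j : Fin (2*q+2), Dnq n q (Fin.castLE (by omega) j)
        (Fin.castLE (by omega) (crossShift q j)) = 0 := by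
      apply Finset.sum_eq_zero
      intro j _
      unfold Dnq
      rw [if_neg]
      have := crossShift_val q j
      simp only [Fin.val_castLE]
      omega
    rw [h0] at key
    have hz : (s * c * s) ⟨0, by omega⟩ = ⟨q+2, by omega⟩ := by
      have e1 : s ⟨0, by omega⟩ = ⟨0, by omega⟩ :=
        Equiv.swap_apply_of_ne_of_ne (by simp [Fin.ext_iff]) (by simp [Fin.ext_iff])
      have e2 : c ⟨0, by omega⟩ = ⟨q+1, by omega⟩ := by
        apply Fin.ext
        have := crossShift_val q ⟨0, by omega⟩
        show (crossShift q ⟨0, by omega⟩).val = q+1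
        simp only at this
        omega
      rw [Equiv.Perm.mul_apply, Equiv.Perm.mul_apply, e1, e2]
      exact Equiv.swap_apply_left _ _
    have hle := Finset.single_le_sum (s := Finset.univ)
      (f := fun j : Fin (2*q+2) => Dnq n q (Fin.castLE (by omega) j)
        (Fin.castLE (by omega) ((s * c * s) j)))
      (fun j _ => by
        simp only [Dnq]
        split_ifs <;> norm_num) (Finset.mem_univ ⟨0, by omega⟩)
    have h1 : Dnq n q (Fin.castLE (by omega) (⟨0, by omega⟩ : Fin (2*q+2)))
        (Fin.castLE (by omega) ((s * c * s) ⟨0, by omega⟩)) = 1 := by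
      rw [hz]
      unfold Dnq
      rw [if_pos]
      simp only [Fin.val_castLE]
      omega
    have h2 := le_trans hle key
    simp only [h1] at h2
    norm_num at h2
end

section
/- Let q ≥ 1 and let D be a symmetric n×n real matrix with n ≥ 2q+2. The identity permutation is a master tour for the q-stripe TSP on D if and only if D is a q-Kalmanson matrix. -/
/-- The principal submatrix of `D` indexed by the set `S`, with the elements of `S`
listed in increasing order. -/
noncomputable def subMat {n : ℕ} (D : Fin n → Fin n → ℝ) (S : Finset (Fin n)) :
    Fin S.card → Fin S.card → ℝ :=
  fun i j => D (S.orderIsoOfFin rfl i).1 (S.orderIsoOfFin rfl j).1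

/-- The identity permutation is a master tour for the `q`-stripe TSP on `D`:
for every subset `S` of the cities with `|S| ≥ 2q+1`, listing the elements of `S`
in increasing order minimizes the `q`-stripe objective (computed with respect to
the principal submatrix of `D` indexed by `S`) over all permutations of `S`. -/
noncomputable def IdIsMasterTour (q : ℕ) {n : ℕ} (D : Fin n → Fin n → ℝ) : Prop :=
  ∀ S : Finset (Fin n), 2*q+1 ≤ S.card →
    ∀ π : Equiv.Perm (Fin S.card),
      stripeObj q (subMat D S) (Equiv.refl (Fin S.card)) ≤ stripeObj q (subMat D S) π

open Finset

/-- cyclic shift-`p` layer of the stripe objective, over the naturals -/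
noncomputable def layN (D : ℕ → ℕ → ℝ) (m p : ℕ) (w : ℕ → ℕ) : ℝ :=
  ∑ i ∈ range m, D (w i) (w ((i + p) % m))

/-- stripe objective over the naturals -/
noncomputable def objN (D : ℕ → ℕ → ℝ) (q m : ℕ) (w : ℕ → ℕ) : ℝ :=
  ∑ p ∈ range q, layN D m (p+1) w

lemma sum_rot (m c : ℕ) (φ : ℕ → ℝ) :
    ∑ i ∈ range m, φ ((i + c) % m) = ∑ i ∈ range m, φ i := by
  induction c with
  | zero =>
    refine sum_congr rfl fun i hi => ?_
    rw [add_zero, Nat.mod_eq_of_lt (mem_range.1 hi)]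
  | succ c ih =>
    rw [← ih]
    have h1 := sum_range_succ (fun i => φ ((i + c) % m)) m
    have h2 := sum_range_succ' (fun i => φ ((i + c) % m)) m
    have h3 : (m + c) % m = (0 + c) % m := by simp
    simp only [h3] at h1
    have h4 : ∑ i ∈ range m, φ ((i + (c+1)) % m) = ∑ i ∈ range m, φ ((i + 1 + c) % m) :=
      sum_congr rfl fun i _ => by rw [show i + (c+1) = i + 1 + c by ring]
    rw [h4]; linarith

lemma lay_rot (D : ℕ → ℕ → ℝ) (m p c : ℕ) (w : ℕ → ℕ) :
    layN D m p (fun i => w ((i + c) % m)) = layN D m p w := by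
  unfold layN
  rw [← sum_rot m c (fun i => D (w i) (w ((i + p) % m)))]
  refine sum_congr rfl fun i _ => ?_
  simp only [Nat.mod_add_mod]
  rw [show i + p + c = i + c + p by ring]

lemma lay_symm (D : ℕ → ℕ → ℝ) (hD : ∀ i j, D i j = D j i) (m p : ℕ) (hp : p ≤ m) (w : ℕ → ℕ) :
    layN D m (m - p) w = layN D m p w := by
  unfold layN
  rw [← sum_rot m (m - p) (fun i => D (w i) (w ((i + p) % m)))]
  refine sum_congr rfl fun i hi => ?_
  rw [hD]
  congr 2
  rw [Nat.mod_add_mod, show i + (m - p) + p = i + m by omega, Nat.add_mod_right,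
    Nat.mod_eq_of_lt (mem_range.1 hi)]

lemma sum_perm (m : ℕ) (w : ℕ → ℕ) (hw : ∀ i < m, w i < m)
    (hinj : ∀ i < m, ∀ j < m, w i = w j → i = j) (φ : ℕ → ℝ) :
    ∑ i ∈ range m, φ (w i) = ∑ i ∈ range m, φ i := by
  have hi : Set.InjOn w (range m : Finset ℕ) := by
    intro i hi j hj h
    exact hinj i (by simpa using hi) j (by simpa using hj) h
  have himg : (range m).image w = range m := by
    apply eq_of_subset_of_card_le
    · intro x hx
      obtain ⟨i, hi, rfl⟩ := mem_image.1 hx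
      exact mem_range.2 (hw i (mem_range.1 hi))
    · rw [card_image_of_injOn hi]
  conv_rhs => rw [← himg]
  rw [sum_image hi]

lemma lay_total (D : ℕ → ℕ → ℝ) (m : ℕ) (w : ℕ → ℕ) (hw : ∀ i < m, w i < m)
    (hinj : ∀ i < m, ∀ j < m, w i = w j → i = j) :
    ∑ p ∈ range m, layN D m p w = ∑ i ∈ range m, ∑ j ∈ range m, D i j := by
  unfold layN
  rw [sum_comm]
  rw [← sum_perm m w hw hinj (fun i => ∑ j ∈ range m, D i j)]
  refine sum_congr rfl fun i _ => ?_
  rw [← sum_perm m w hw hinj (fun j => D (w i) j)]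
  rw [← sum_rot m i (fun j => D (w i) (w j))]
  refine sum_congr rfl fun p _ => ?_
  rw [add_comm]

lemma lay_zero (D : ℕ → ℕ → ℝ) (m : ℕ) (w : ℕ → ℕ) (hw : ∀ i < m, w i < m)
    (hinj : ∀ i < m, ∀ j < m, w i = w j → i = j) :
    layN D m 0 w = ∑ i ∈ range m, D i i := by
  unfold layN
  rw [← sum_perm m w hw hinj (fun i => D i i)]
  refine sum_congr rfl fun i hi => ?_
  rw [add_zero, Nat.mod_eq_of_lt (mem_range.1 hi)]

lemma obj_odd (D : ℕ → ℕ → ℝ) (hD : ∀ i j, D i j = D j i) (q : ℕ) (w : ℕ → ℕ)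
    (hw : ∀ i < 2*q+1, w i < 2*q+1)
    (hinj : ∀ i < 2*q+1, ∀ j < 2*q+1, w i = w j → i = j) :
    2 * objN D q (2*q+1) w = ∑ i ∈ range (2*q+1), ∑ j ∈ range (2*q+1), D i j
      - ∑ i ∈ range (2*q+1), D i i := by
  rw [← lay_total D _ w hw hinj, ← lay_zero D _ w hw hinj, sum_range_succ' _ (2*q), two_mul q,
    sum_range_add]
  have : ∑ x ∈ range q, layN D (q+q+1) (q + x + 1) w = objN D q (q+q+1) w := by
    unfold objN
    rw [← sum_range_reflect]
    refine sum_congr rfl fun i hi => ?_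
    have := mem_range.1 hi
    rw [← lay_symm D hD (q+q+1) (i+1) (by omega)]
    congr 1; omega
  rw [this]
  unfold objN
  ring

lemma obj_even (D : ℕ → ℕ → ℝ) (hD : ∀ i j, D i j = D j i) (q : ℕ) (w : ℕ → ℕ)
    (hw : ∀ i < 2*q+2, w i < 2*q+2)
    (hinj : ∀ i < 2*q+2, ∀ j < 2*q+2, w i = w j → i = j) :
    2 * objN D q (2*q+2) w + layN D (2*q+2) (q+1) w
      = ∑ i ∈ range (2*q+2), ∑ j ∈ range (2*q+2), D i j
      - ∑ i ∈ range (2*q+2), D i i := by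
  rw [← lay_total D _ w hw hinj, ← lay_zero D _ w hw hinj, sum_range_succ' _ (2*q+1),
    show 2*q+1 = (q+1) + q by ring, sum_range_add, sum_range_succ]
  have : ∑ x ∈ range q, layN D (2*q+2) (q + 1 + x + 1) w = objN D q (2*q+2) w := by
    unfold objN
    rw [← sum_range_reflect]
    refine sum_congr rfl fun i hi => ?_
    have := mem_range.1 hi
    rw [← lay_symm D hD (2*q+2) (i+1) (by omega)]
    congr 1; omega
  rw [this]
  unfold objN
  ring

/-- Kalmanson condition over the naturals -/
def KalN (D : ℕ → ℕ → ℝ) (q N : ℕ) : Prop :=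
  ∀ f : ℕ → ℕ, (∀ i j, i < j → j < 2*q+2 → f i < f j) → (∀ i < 2*q+2, f i < N) →
    ∀ g : ℕ → ℕ, (∀ i < 2*q+2, ∃ j < 2*q+2, f j = g i) →
      (∀ i < 2*q+2, ∀ j < 2*q+2, g i = g j → i = j) →
      ∑ j ∈ range (q+1), D (g j) (g (j+(q+1))) ≤ ∑ j ∈ range (q+1), D (f j) (f (j+(q+1)))

/-- insertion cost -/
noncomputable def cst (D : ℕ → ℕ → ℝ) (q k : ℕ) (g : ℕ → ℕ) : ℝ :=
  ∑ j ∈ range (q+q), D (g j) k - ∑ j ∈ range q, D (g j) (g (q+j))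

/-- insert `z` in the middle and `k` at the end -/
def insN (q k z : ℕ) (g : ℕ → ℕ) (i : ℕ) : ℕ :=
  if i < q then g i else if i = q then z else if i ≤ 2*q then g (i-1) else k

lemma insN_skip (q k z : ℕ) (g : ℕ → ℕ) (j : ℕ) (hj : j < 2*q) :
    insN q k z g (if j < q then j else j + 1) = g j := by
  by_cases h : j < q
  · simp [insN, h]
  · rw [if_neg h]
    unfold insN
    rw [if_neg (by omega), if_neg (by omega), if_pos (by omega)]
    simp

lemma insN_match (D : ℕ → ℕ → ℝ) (q k z : ℕ) (g : ℕ → ℕ) :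
    ∑ j ∈ range (q+1), D (insN q k z g j) (insN q k z g (j+(q+1)))
      = ∑ j ∈ range q, D (g j) (g (q+j)) + D z k := by
  rw [sum_range_succ]
  congr 1
  · refine sum_congr rfl fun i hi => ?_
    have := mem_range.1 hi
    have h1 : insN q k z g i = g i := by simp [insN, this]
    have h2 : insN q k z g (i+(q+1)) = g (q+i) := by
      unfold insN
      rw [if_neg (by omega), if_neg (by omega), if_pos (by omega)]
      congr 1; omega
    rw [h1, h2]
  · have h1 : insN q k z g q = z := by simp [insN]
    have h2 : insN q k z g (q+(q+1)) = k := by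
      unfold insN
      rw [if_neg (by omega), if_neg (by omega), if_neg (by omega)]
    rw [h1, h2]

lemma insN_sum (q k z : ℕ) (g : ℕ → ℕ) (φ : ℕ → ℝ) :
    ∑ j ∈ range (2*q+2), φ (insN q k z g j)
      = ∑ j ∈ range (q+q), φ (g j) + φ z + φ k := by
  rw [show 2*q+2 = (q+1) + q + 1 by ring, sum_range_succ, sum_range_add, sum_range_succ,
    sum_range_add]
  have h1 : insN q k z g q = z := by simp [insN]
  have h2 : insN q k z g (q+1+q) = k := by
    unfold insN
    rw [if_neg (by omega), if_neg (by omega), if_neg (by omega)]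
  have h3 : ∑ j ∈ range q, φ (insN q k z g j) = ∑ j ∈ range q, φ (g j) := by
    refine sum_congr rfl fun i hi => ?_
    have := mem_range.1 hi
    simp [insN, this]
  have h4 : ∑ j ∈ range q, φ (insN q k z g (q+1+j)) = ∑ j ∈ range q, φ (g (q+j)) := by
    refine sum_congr rfl fun i hi => ?_
    have := mem_range.1 hi
    congr 1
    unfold insN
    rw [if_neg (by omega), if_neg (by omega), if_pos (by omega)]
    congr 1; omega
  rw [h1, h2, h3, h4]; ring

/-- the step: `f` is the increasing enumeration of `X ∪ {z,k}`, where `f = insN (f q) h`. -/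
lemma cst_step (D : ℕ → ℕ → ℝ) (q N k : ℕ) (K : KalN D q N) (g h : ℕ → ℕ) (z y : ℕ)
    (hmono : ∀ i j, i < j → j < 2*q+2 → insN q k y h i < insN q k y h j)
    (hN : ∀ i < 2*q+2, insN q k y h i < N)
    (himg : ∀ i < 2*q+2, ∃ j < 2*q+2, insN q k y h j = insN q k z g i)
    (hinj : ∀ i < 2*q+2, ∀ j < 2*q+2, insN q k z g i = insN q k z g j → i = j) :
    cst D q k h ≤ cst D q k g := by
  have h1 := K _ hmono hN _ himg hinj
  rw [insN_match, insN_match] at h1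
  have hs : ∑ j ∈ range (2*q+2), D (insN q k z g j) k = ∑ j ∈ range (2*q+2), D (insN q k y h j) k := by
    have e1 : (range (2*q+2)).image (insN q k z g) = (range (2*q+2)).image (insN q k y h) := by
      apply eq_of_subset_of_card_le
      · intro x hx
        obtain ⟨i, hi, rfl⟩ := mem_image.1 hx
        obtain ⟨j, hj, e⟩ := himg i (mem_range.1 hi)
        exact mem_image.2 ⟨j, mem_range.2 hj, e⟩
      · rw [card_image_of_injOn (s := range (2*q+2)) (f := insN q k z g)]
        · exact card_image_le
        · intro i hi j hj e
          exact hinj i (by simpa using hi) j (by simpa using hj) e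
    rw [← sum_image (f := fun x => D x k) (g := insN q k z g),
      ← sum_image (f := fun x => D x k) (g := insN q k y h), e1]
    · intro i hi j hj e
      have hi := List.mem_range.1 hi
      have hj := List.mem_range.1 hj
      by_contra hne
      rcases lt_or_gt_of_ne hne with h | h
      · have := hmono _ _ h hj; omega
      · have := hmono _ _ h hi; omega
    · intro i hi j hj e
      exact hinj i (by simpa using hi) j (by simpa using hj) e
  rw [insN_sum q k z g (fun x => D x k), insN_sum q k y h (fun x => D x k)] at hs
  unfold cst
  linarith

/-- the optimal neighbourhood -/
def optN (q k j : ℕ) : ℕ := if j < q then j else k - 2*q + j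

lemma insN_inj (q k z : ℕ) (g : ℕ → ℕ) (hg : ∀ i < 2*q, g i < k)
    (hinj : ∀ i < 2*q, ∀ j < 2*q, g i = g j → i = j) (hz : z < k) (hzg : ∀ i < 2*q, g i ≠ z) :
    ∀ i < 2*q+2, ∀ j < 2*q+2, insN q k z g i = insN q k z g j → i = j := by
  intro i hi j hj h
  unfold insN at h
  grind

lemma cst_opt (D : ℕ → ℕ → ℝ) (q N k : ℕ) (K : KalN D q N) (hk : 2*q+1 ≤ k) (hkN : k < N) :
    ∀ d : ℕ, ∀ g : ℕ → ℕ, (∀ i < 2*q, g i < k) →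
    (∀ i < 2*q, ∀ j < 2*q, g i = g j → i = j) →
    ((range (2*q)).image (optN q k) \ (range (2*q)).image g).card = d →
    cst D q k (optN q k) ≤ cst D q k g := by
  intro d
  induction d using Nat.strong_induction_on with
  | _ d ih =>
  intro g hg hinj hd
  rcases Nat.eq_zero_or_pos d with h0 | hpos
  · subst h0
    rw [card_eq_zero, sdiff_eq_empty_iff_subset] at hd
    have hoi : ∀ i < 2*q, ∀ j < 2*q, optN q k i = optN q k j → i = j := by
      intro i hi j hj h
      unfold optN at h
      split_ifs at h <;> omega
    have heq : (range (2*q)).image (optN q k) = (range (2*q)).image g := by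
      apply eq_of_subset_of_card_le hd
      rw [card_image_of_injOn (f := optN q k)]
      · exact card_image_le
      · intro i hi j hj e
        exact hoi i (by simpa using hi) j (by simpa using hj) e
    have hmem : ∀ i < 2*q, ∃ j < 2*q, optN q k j = g i := by
      intro i hi
      have : g i ∈ (range (2*q)).image g := mem_image_of_mem _ (mem_range.2 hi)
      rw [← heq] at this
      simpa using this
    have hne : ∀ i < 2*q, g i ≠ q := by
      intro i hi h
      obtain ⟨j, hj, e⟩ := hmem i hi
      rw [h] at e
      unfold optN at e
      split_ifs at e <;> omega
    refine cst_step D q N k K g (optN q k) q q ?_ ?_ ?_ (insN_inj q k q g hg hinj (by omega) hne)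
    · intro i j hij hj
      unfold insN optN
      split_ifs <;> omega
    · intro i hi
      unfold insN optN
      split_ifs <;> omega
    · intro i hi
      by_cases h1 : i < q
      · obtain ⟨j, hj, e⟩ := hmem i (by omega)
        refine ⟨if j < q then j else j + 1, by split_ifs <;> omega, ?_⟩
        rw [insN_skip _ _ _ _ _ hj, e]
        unfold insN
        split_ifs <;> rfl
      by_cases h2 : i = q
      · exact ⟨q, by omega, by simp [insN, h2]⟩
      by_cases h3 : i ≤ 2*q
      · obtain ⟨j, hj, e⟩ := hmem (i-1) (by omega)
        refine ⟨if j < q then j else j + 1, by split_ifs <;> omega, ?_⟩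
        rw [insN_skip _ _ _ _ _ hj, e]
        unfold insN
        split_ifs <;> rfl
      · refine ⟨i, hi, ?_⟩
        simp only [insN, if_neg h1, if_neg h2, if_neg h3]
  · rw [← hd] at hpos
    obtain ⟨z, hz⟩ := card_pos.1 hpos
    obtain ⟨hz1, hz2⟩ := mem_sdiff.1 hz
    have hzk : z < k := by
      obtain ⟨j, hj, rfl⟩ := mem_image.1 hz1
      have := mem_range.1 hj
      unfold optN; split_ifs <;> omega
    have hzg : ∀ i < 2*q, g i ≠ z := by
      intro i hi h
      exact hz2 (mem_image.2 ⟨i, mem_range.2 hi, h⟩)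
    have hIinj := insN_inj q k z g hg hinj hzk hzg
    set Z := (range (2*q+2)).image (insN q k z g) with hZ
    have hZc : Z.card = 2*q+2 := by
      rw [hZ, card_image_of_injOn, card_range]
      intro i hi j hj e
      exact hIinj i (by simpa using hi) j (by simpa using hj) e
    -- increasing enumeration
    let F := Z.orderEmbOfFin hZc
    let f : ℕ → ℕ := fun i => if h : i < 2*q+2 then F ⟨i, h⟩ else 0
    have hfmono : ∀ i j, i < j → j < 2*q+2 → f i < f j := by
      intro i j hij hj
      have hi : i < 2*q+2 := by omega
      simp only [f, dif_pos hi, dif_pos hj]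
      exact F.strictMono (by simpa using hij)
    have hfmem : ∀ i < 2*q+2, f i ∈ Z := by
      intro i hi
      simp only [f, dif_pos hi]
      exact orderEmbOfFin_mem Z hZc _
    have hfsurj : ∀ x ∈ Z, ∃ j < 2*q+2, f j = x := by
      intro x hx
      have : x ∈ Set.range F := by
        rw [range_orderEmbOfFin]; exact hx
      obtain ⟨⟨j, hj⟩, e⟩ := this
      exact ⟨j, hj, by simp only [f, dif_pos hj]; exact e⟩
    have hZk : ∀ x ∈ Z, x ≤ k := by
      intro x hx
      obtain ⟨i, hi, rfl⟩ := mem_image.1 hx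
      have hi := mem_range.1 hi
      unfold insN
      split_ifs
      · exact (hg _ (by omega)).le
      · exact hzk.le
      · exact (hg _ (by omega)).le
      · exact le_rfl
    have hkZ : k ∈ Z := by
      refine mem_image.2 ⟨2*q+1, mem_range.2 (by omega), ?_⟩
      unfold insN
      rw [if_neg (by omega), if_neg (by omega), if_neg (by omega)]
    have hlast : f (2*q+1) = k := by
      obtain ⟨j, hj, e⟩ := hfsurj k hkZ
      have h1 := hZk _ (hfmem (2*q+1) (by omega))
      rcases Nat.lt_or_ge j (2*q+1) with h | h
      · have := hfmono j (2*q+1) h (by omega); omega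
      · have : j = 2*q+1 := by omega
        rw [← this, e]
    let h : ℕ → ℕ := fun i => if i < q then f i else f (i+1)
    have hfI : ∀ i < 2*q+2, insN q k (f q) h i = f i := by
      intro i hi
      by_cases h1 : i < q
      · simp [insN, h, h1]
      by_cases h2 : i = q
      · simp [insN, h2]
      by_cases h3 : i ≤ 2*q
      · unfold insN
        rw [if_neg h1, if_neg h2, if_pos h3]
        simp only [h]
        rw [if_neg (by omega)]
        congr 1; omega
      · unfold insN
        rw [if_neg h1, if_neg h2, if_neg h3, ← hlast]
        congr 1; omega
    have hstep : cst D q k h ≤ cst D q k g := by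
      refine cst_step D q N k K g h z (f q) ?_ ?_ ?_ hIinj
      · intro i j hij hj
        rw [hfI i (by omega), hfI j hj]; exact hfmono i j hij hj
      · intro i hi
        rw [hfI i hi]
        exact lt_of_le_of_lt (hZk _ (hfmem i hi)) hkN
      · intro i hi
        obtain ⟨j, hj, e⟩ := hfsurj (insN q k z g i) (mem_image_of_mem _ (mem_range.2 hi))
        exact ⟨j, hj, by rw [hfI j hj, e]⟩
    refine le_trans ?_ hstep
    have hlow : ∀ i < 2*q+2, i ≤ f i := by
      intro i
      induction i with
      | zero => intro _; exact Nat.zero_le _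
      | succ i ihi =>
        intro hi
        have := ihi (by omega)
        have := hfmono i (i+1) (by omega) hi
        omega
    have hup : ∀ t, t ≤ q+1 → f q + t ≤ f (q+t) := by
      intro t
      induction t with
      | zero => intro _; simp
      | succ t iht =>
        intro ht
        have := iht (by omega)
        have := hfmono (q+t) (q+(t+1)) (by omega) (by omega)
        omega
    have hq1 := hlow q (by omega)
    have hq2 := hup (q+1) le_rfl
    rw [show q + (q+1) = 2*q+1 by ring, hlast] at hq2
    have hfopt : ∀ i < 2*q, optN q k i ≠ f q := by
      intro i hi e
      unfold optN at e
      split_ifs at e <;> omega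
    have hkopt : ∀ i < 2*q, optN q k i ≠ k := by
      intro i hi e
      unfold optN at e
      split_ifs at e <;> omega
    have hhsurj : ∀ x ∈ Z, x ≠ f q → x ≠ k → x ∈ (range (2*q)).image h := by
      intro x hx h1 h2
      obtain ⟨j, hj, e⟩ := hfsurj x hx
      have hjq : j ≠ q := by rintro rfl; exact h1 e.symm
      have hjl : j ≠ 2*q+1 := by rintro rfl; exact h2 (by rw [← e, hlast])
      refine mem_image.2 ?_
      rcases Nat.lt_or_ge j q with hl | hl
      · exact ⟨j, mem_range.2 (by omega), by simp only [h]; rw [if_pos hl, e]⟩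
      · refine ⟨j-1, mem_range.2 (by omega), ?_⟩
        simp only [h]
        rw [if_neg (by omega), show j - 1 + 1 = j by omega, e]
    have hgZ : ∀ i < 2*q, g i ∈ Z := by
      intro i hi
      refine mem_image.2 ⟨if i < q then i else i+1, mem_range.2 (by split_ifs <;> omega), insN_skip q k z g i hi⟩
    have hzZ : z ∈ Z := mem_image.2 ⟨q, mem_range.2 (by omega), by simp [insN]⟩
    have hhk : ∀ i < 2*q, h i < k := by
      intro i hi
      rw [← hlast]
      simp only [h]
      split_ifs
      · exact hfmono _ _ (by omega) (by omega)
      · exact hfmono _ _ (by omega) (by omega)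
    have hfinj : ∀ i < 2*q+2, ∀ j < 2*q+2, f i = f j → i = j := by
      intro i hi j hj e
      by_contra hne
      rcases lt_or_gt_of_ne hne with h | h
      · have := hfmono _ _ h hj; omega
      · have := hfmono _ _ h hi; omega
    have hhinj : ∀ i < 2*q, ∀ j < 2*q, h i = h j → i = j := by
      intro i hi j hj e
      simp only [h] at e
      split_ifs at e
      · exact hfinj _ (by omega) _ (by omega) e
      · have := hfinj _ (by omega) _ (by omega) e; omega
      · have := hfinj _ (by omega) _ (by omega) e; omega
      · have := hfinj _ (by omega) _ (by omega) e; omega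
    refine ih _ ?_ h hhk hhinj rfl
    rw [← hd]
    apply card_lt_card
    rw [ssubset_iff_of_subset]
    · refine ⟨z, hz, ?_⟩
      intro hzz
      refine (mem_sdiff.1 hzz).2 (hhsurj z hzZ ?_ (by omega))
      obtain ⟨j, hj, e⟩ := mem_image.1 hz1
      rw [← e]; exact hfopt j (mem_range.1 hj)
    · intro x hx
      obtain ⟨hx1, hx2⟩ := mem_sdiff.1 hx
      refine mem_sdiff.2 ⟨hx1, fun hxg => hx2 ?_⟩
      obtain ⟨j, hj, e⟩ := mem_image.1 hx1
      obtain ⟨i, hi, e'⟩ := mem_image.1 hxg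
      refine hhsurj x (by rw [← e']; exact hgZ i (mem_range.1 hi)) ?_ ?_
      · rw [← e]; exact hfopt j (mem_range.1 hj)
      · rw [← e]; exact hkopt j (mem_range.1 hj)

/-- wrap-around part of a layer -/
noncomputable def wrapN (D : ℕ → ℕ → ℝ) (k p : ℕ) (w : ℕ → ℕ) : ℝ :=
  ∑ j ∈ range p, D (w (k - p + j)) (w j)

lemma lay_split (D : ℕ → ℕ → ℝ) (k p : ℕ) (hp : p ≤ k) (w : ℕ → ℕ) :
    layN D k p w = ∑ i ∈ range (k-p), D (w i) (w (i+p)) + wrapN D k p w := by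
  unfold layN wrapN
  have : range k = range ((k - p) + p) := by rw [Nat.sub_add_cancel hp]
  rw [this, sum_range_add]
  congr 1
  · refine sum_congr rfl fun i hi => ?_
    have := mem_range.1 hi
    rw [Nat.mod_eq_of_lt (by omega)]
  · refine sum_congr rfl fun i hi => ?_
    have := mem_range.1 hi
    rw [show k - p + i + p = i + k by omega, Nat.add_mod_right, Nat.mod_eq_of_lt (by omega)]

lemma lay_succ (D : ℕ → ℕ → ℝ) (k p : ℕ) (hp : p + 1 ≤ k) (w : ℕ → ℕ) :
    layN D (k+1) (p+1) w = layN D k (p+1) w + D (w (k-(p+1))) (w k) + D (w k) (w p)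
      + wrapN D k p w - wrapN D k (p+1) w := by
  rw [lay_split D k (p+1) hp, lay_split D (k+1) (p+1) (by omega)]
  rw [show k + 1 - (p+1) = (k - (p+1)) + 1 by omega, sum_range_succ,
    show k - (p+1) + (p+1) = k by omega]
  have : wrapN D (k+1) (p+1) w = wrapN D k p w + D (w k) (w p) := by
    unfold wrapN
    rw [sum_range_succ, show k + 1 - (p+1) = k - p by omega, show k - p + p = k by omega]
  rw [this]; ring

lemma obj_succ (D : ℕ → ℕ → ℝ) (hD : ∀ i j, D i j = D j i) (q k : ℕ) (hq : 2*q+1 ≤ k) (w : ℕ → ℕ) :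
    objN D q (k+1) w = objN D q k w
      + cst D q (w k) (fun j => if j < q then w j else w (k - 2*q + j)) := by
  have h1 : objN D q (k+1) w = objN D q k w + ∑ p ∈ range q, D (w (k-(p+1))) (w k)
      + ∑ p ∈ range q, D (w p) (w k) - wrapN D k q w := by
    have : ∀ r ≤ q, objN D r (k+1) w = objN D r k w + ∑ p ∈ range r, D (w (k-(p+1))) (w k)
      + ∑ p ∈ range r, D (w p) (w k) - wrapN D k r w := by
      intro r
      induction r with
      | zero => intro _; simp [objN, wrapN]
      | succ r ih =>
        intro hr
        have := ih (by omega)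
        unfold objN at this ⊢
        rw [sum_range_succ, sum_range_succ _ r, sum_range_succ _ r, sum_range_succ _ r, this,
          lay_succ D k r (by omega), hD (w k)]
        ring
    exact this q le_rfl
  rw [h1]
  unfold cst wrapN
  rw [sum_range_add]
  have e1 : ∑ p ∈ range q, D (w (k-(p+1))) (w k)
      = ∑ x ∈ range q, D (if q + x < q then w (q+x) else w (k - 2*q + (q+x))) (w k) := by
    rw [← sum_range_reflect]
    refine sum_congr rfl fun i hi => ?_
    have := mem_range.1 hi
    rw [if_neg (by omega)]
    congr 2; omega
  have e2 : ∑ x ∈ range q, D (if x < q then w x else w (k - 2*q + x)) (w k)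
      = ∑ p ∈ range q, D (w p) (w k) :=
    sum_congr rfl fun i hi => by rw [if_pos (mem_range.1 hi)]
  have e3 : ∑ x ∈ range q, D (if x < q then w x else w (k - 2*q + x))
        (if q + x < q then w (q+x) else w (k - 2*q + (q+x)))
      = ∑ j ∈ range q, D (w (k - q + j)) (w j) := by
    refine sum_congr rfl fun i hi => ?_
    have := mem_range.1 hi
    rw [if_pos this, if_neg (by omega), hD]
    congr 2; omega
  rw [e1, e2, e3]; ring

lemma main_nat (D : ℕ → ℕ → ℝ) (hD : ∀ i j, D i j = D j i) (q N : ℕ) (K : KalN D q N) :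
    ∀ m, 2*q+1 ≤ m → m ≤ N → ∀ w : ℕ → ℕ, (∀ i < m, w i < m) →
      (∀ i < m, ∀ j < m, w i = w j → i = j) → objN D q m (fun i => i) ≤ objN D q m w := by
  intro m hm
  induction m, hm using Nat.le_induction with
  | base =>
    intro _ w hw hinj
    have h1 := obj_odd D hD q w hw hinj
    have h2 := obj_odd D hD q (fun i => i) (fun i hi => hi) (fun i _ j _ h => h)
    linarith
  | succ k hk ih =>
    intro hN w hw hinj
    have hex : ∃ i < k+1, w i = k := by
      have himg : (range (k+1)).image w = range (k+1) := by
        apply eq_of_subset_of_card_le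
        · intro x hx
          obtain ⟨i, hi, rfl⟩ := mem_image.1 hx
          exact mem_range.2 (hw i (mem_range.1 hi))
        · rw [card_image_of_injOn]
          intro i hi j hj h
          exact hinj i (by simpa using hi) j (by simpa using hj) h
      have : k ∈ (range (k+1)).image w := by rw [himg]; simp
      simpa only [mem_image, mem_range] using this
    obtain ⟨c, hc, hck⟩ := hex
    let u : ℕ → ℕ := fun i => w ((i + (c+1)) % (k+1))
    have hobj : objN D q (k+1) u = objN D q (k+1) w :=
      sum_congr rfl fun p _ => lay_rot D (k+1) (p+1) (c+1) w
    have huk : u k = k := by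
      simp only [u]
      rw [show k + (c+1) = c + (k+1) by ring, Nat.add_mod_right, Nat.mod_eq_of_lt hc, hck]
    have hu1 : ∀ i < k+1, u i < k+1 := fun i _ => hw _ (Nat.mod_lt _ (by omega))
    have hu2 : ∀ i < k+1, ∀ j < k+1, u i = u j → i = j := by
      intro i hi j hj h
      have := hinj _ (Nat.mod_lt _ (by omega)) _ (Nat.mod_lt _ (by omega)) h
      have h2 : i ≡ j [MOD (k+1)] := Nat.ModEq.add_right_cancel' (c+1) this
      exact Nat.ModEq.eq_of_lt_of_lt h2 hi hj
    have hu3 : ∀ i < k, u i < k := by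
      intro i hi
      have h1 := hu1 i (by omega)
      have h2 : u i ≠ k := by
        intro h
        have := hu2 i (by omega) k (by omega) (by rw [h, huk])
        omega
      omega
    have h1 := ih (by omega) u hu3 (fun i hi j hj => hu2 i (by omega) j (by omega))
    rw [← hobj, obj_succ D hD q k hk u, obj_succ D hD q k hk (fun i => i), huk]
    refine add_le_add h1 ?_
    refine cst_opt D q N k K hk (by omega) _ _ ?_ ?_ rfl
    · intro i hi
      split_ifs
      · exact hu3 _ (by omega)
      · exact hu3 _ (by omega)
    · intro i hi j hj h
      split_ifs at h
      all_goals
        have := hu2 _ (by omega) _ (by omega) h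
        omega

/-- extension of a matrix by zero -/
noncomputable def extM {m : ℕ} (D : Fin m → Fin m → ℝ) (i j : ℕ) : ℝ :=
  if hi : i < m then if hj : j < m then D ⟨i, hi⟩ ⟨j, hj⟩ else 0 else 0

/-- extension of a permutation -/
def extP {m : ℕ} (π : Fin m → Fin m) (i : ℕ) : ℕ :=
  if hi : i < m then (π ⟨i, hi⟩).val else i

lemma extM_fin {m : ℕ} (D : Fin m → Fin m → ℝ) (i j : Fin m) : extM D i j = D i j := by
  simp [extM]

lemma extP_fin {m : ℕ} (π : Fin m → Fin m) (i : Fin m) : extP π i = π i := by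
  simp [extP]

lemma extM_symm {m : ℕ} (D : Fin m → Fin m → ℝ) (h : ∀ i j, D i j = D j i) (i j : ℕ) :
    extM D i j = extM D j i := by
  unfold extM
  split_ifs <;> first | rfl | exact h _ _

lemma extP_lt {m : ℕ} (π : Fin m → Fin m) : ∀ i < m, extP π i < m := by
  intro i hi
  simp [extP, hi]

lemma extP_inj {m : ℕ} (π : Equiv.Perm (Fin m)) :
    ∀ i < m, ∀ j < m, extP π i = extP π j → i = j := by
  intro i hi j hj h
  simp only [extP, dif_pos hi, dif_pos hj] at h
  simpa using π.injective (Fin.ext h)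

lemma lay_fin {m : ℕ} (D : Fin m → Fin m → ℝ) (π : Fin m → Fin m) (p : ℕ) :
    layN (extM D) m p (extP π) = ∑ i : Fin m, D (π i) (π (finShift i p)) := by
  unfold layN
  rw [← Fin.sum_univ_eq_sum_range (fun i => extM D (extP π i) (extP π ((i+p) % m)))]
  refine sum_congr rfl fun i _ => ?_
  have : (i.val + p) % m = (finShift i p).val := rfl
  rw [this, extP_fin, extP_fin, extM_fin]

lemma obj_fin (q : ℕ) {m : ℕ} (D : Fin m → Fin m → ℝ) (π : Equiv.Perm (Fin m)) :
    stripeObj q D π = objN (extM D) q m (extP π) := by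
  unfold stripeObj objN
  rw [← Finset.Ico_add_one_right_eq_Icc, sum_Ico_eq_sum_range]
  refine sum_congr (by simp) fun p _ => ?_
  rw [lay_fin, add_comm]

lemma extP_refl {m : ℕ} : extP (Equiv.refl (Fin m)) = fun i => i := by
  funext i; simp [extP]

lemma cross_half (q : ℕ) (d : Fin (2*q+2) → Fin (2*q+2) → ℝ) (hd : ∀ i j, d i j = d j i) :
    ∑ j, d j (crossShift q j) = 2 * ∑ j ∈ range (q+1), extM d j (j+(q+1)) := by
  have h := lay_fin d id (q+1)
  have h2 : ∑ j, d j (crossShift q j) = layN (extM d) (2*q+2) (q+1) (fun i => i) := by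
    have := lay_fin d (Equiv.refl _) (q+1)
    rw [extP_refl] at this
    rw [this]; rfl
  rw [h2, lay_split _ _ _ (by omega), show 2*q+2-(q+1) = q+1 by omega]
  unfold wrapN
  rw [two_mul (∑ j ∈ range (q+1), extM d j (j+(q+1)))]
  congr 1
  refine sum_congr rfl fun i _ => ?_
  have e : 2*q+2-(q+1) + i = i + (q+1) := by omega
  rw [extM_symm d hd]
  simp only [e]

lemma cross_invol (q : ℕ) (j : Fin (2*q+2)) : crossShift q (crossShift q j) = j := by
  ext
  simp only [crossShift]
  rw [Nat.mod_add_mod, show j.val + (q+1) + (q+1) = j.val + (2*q+2) by ring, Nat.add_mod_right,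
    Nat.mod_eq_of_lt j.isLt]

lemma cross_ne (q : ℕ) (j : Fin (2*q+2)) : crossShift q j ≠ j := by
  intro h
  have := congrArg Fin.val h
  simp only [crossShift] at this
  have hj := j.isLt
  rcases Nat.lt_or_ge j.val (q+1) with h1 | h1
  · rw [Nat.mod_eq_of_lt (by omega)] at this; omega
  · rw [Nat.mod_eq_sub_mod (by omega), Nat.mod_eq_of_lt (by omega)] at this; omega

/-- crossing involution as a permutation -/
def crossP (q : ℕ) : Equiv.Perm (Fin (2*q+2)) :=
  ⟨crossShift q, crossShift q, cross_invol q, cross_invol q⟩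

lemma kal_to_nat (q : ℕ) {n m : ℕ} (D : Fin n → Fin n → ℝ) (hD : ∀ i j, D i j = D j i)
    (hK : qKalmanson q D) (e : Fin m → Fin n) (he : StrictMono e) :
    KalN (extM (fun i j => D (e i) (e j))) q m := by
  intro f hf hfm g hg hgi
  choose r hr1 hr2 using hg
  let R : Fin (2*q+2) → Fin (2*q+2) := fun i => ⟨r i i.isLt, hr1 i i.isLt⟩
  have hRi : Function.Injective R := by
    intro i j h
    have h' : r i i.isLt = r j j.isLt := congrArg Fin.val h
    apply Fin.ext
    apply hgi i i.isLt j j.isLt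
    rw [← hr2 i i.isLt, ← hr2 j j.isLt, h']
  let ρ : Equiv.Perm (Fin (2*q+2)) := Equiv.ofBijective R (Finite.injective_iff_bijective.1 hRi)
  let F : Fin (2*q+2) → Fin n := fun i => e ⟨f i, hfm i i.isLt⟩
  have hF : StrictMono F := by
    intro i j hij
    exact he (hf i j hij j.isLt)
  have key := hK F hF (ρ⁻¹.trans ((crossP q).trans ρ)) ?_ ?_
  · have e1 : ∑ j, D (F j) (F ((ρ⁻¹.trans ((crossP q).trans ρ)) j))
        = ∑ j, D (F (ρ j)) (F (ρ (crossShift q j))) := by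
      rw [← Equiv.sum_comp ρ (fun j => D (F j) (F ((ρ⁻¹.trans ((crossP q).trans ρ)) j)))]
      refine sum_congr rfl fun j _ => ?_
      simp [crossP]
    rw [e1, cross_half q (fun i j => D (F (ρ i)) (F (ρ j))) (fun _ _ => hD _ _),
      cross_half q (fun i j => D (F i) (F j)) (fun _ _ => hD _ _)] at key
    have key := le_of_mul_le_mul_left key two_pos
    have k1 : ∑ j ∈ range (q+1), extM (fun i j => D (e i) (e j)) (g j) (g (j+(q+1)))
        = ∑ j ∈ range (q+1), extM (fun i j => D (F (ρ i)) (F (ρ j))) j (j+(q+1)) := by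
      refine sum_congr rfl fun j hj => ?_
      have hj := mem_range.1 hj
      have h1 : j < 2*q+2 := by omega
      have h2 : j + (q+1) < 2*q+2 := by omega
      rw [← hr2 j h1, ← hr2 _ h2]
      unfold extM
      rw [dif_pos (hfm _ (hr1 j h1)), dif_pos (hfm _ (hr1 _ h2)), dif_pos h1, dif_pos h2]
      rfl
    have k2 : ∑ j ∈ range (q+1), extM (fun i j => D (e i) (e j)) (f j) (f (j+(q+1)))
        = ∑ j ∈ range (q+1), extM (fun i j => D (F i) (F j)) j (j+(q+1)) := by
      refine sum_congr rfl fun j hj => ?_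
      have hj := mem_range.1 hj
      have h1 : j < 2*q+2 := by omega
      have h2 : j + (q+1) < 2*q+2 := by omega
      unfold extM
      rw [dif_pos (hfm _ h1), dif_pos (hfm _ h2), dif_pos h1, dif_pos h2]
    rw [k1, k2]
    exact key
  · intro j
    simp [crossP, cross_invol]
  · intro j h
    have : crossShift q (ρ⁻¹ j) = ρ⁻¹ j := by
      apply ρ.injective
      simpa [crossP] using h
    exact cross_ne q _ this

lemma invol_conj (q : ℕ) (σ : Equiv.Perm (Fin (2*q+2))) (h1 : ∀ j, σ (σ j) = j)
    (h2 : ∀ j, σ j ≠ j) : ∃ ρ : Equiv.Perm (Fin (2*q+2)), ∀ j, σ (ρ j) = ρ (crossShift q j) := by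
  have ct : ∀ τ : Equiv.Perm (Fin (2*q+2)), (∀ j, τ (τ j) = j) → (∀ j, τ j ≠ j) →
      τ.cycleType = Multiset.replicate (q+1) 2 := by
    intro τ t1 t2
    have hall : ∀ c ∈ τ.cycleType, c = 2 := by
      intro c hc
      have hd : c ∣ orderOf τ := Equiv.Perm.dvd_of_mem_cycleType hc
      have ho : orderOf τ ∣ 2 := orderOf_dvd_of_pow_eq_one (by ext j; simp [pow_two, t1])
      have hc2 := Equiv.Perm.two_le_of_mem_cycleType hc
      have := Nat.le_of_dvd two_pos (hd.trans ho)
      omega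
    have hrep := Multiset.eq_replicate_card.2 hall
    have hsum := Equiv.Perm.sum_cycleType τ
    have hsupp : τ.support = univ := by
      ext j; simp [t2 j]
    rw [hsupp, hrep] at hsum
    simp at hsum
    rw [hrep]
    congr 1
    omega
  have hconj : IsConj (crossP q) σ := by
    rw [Equiv.Perm.isConj_iff_cycleType_eq, ct σ h1 h2,
      ct (crossP q) (cross_invol q) (cross_ne q)]
  obtain ⟨ρ, hρ⟩ := isConj_iff.1 hconj
  refine ⟨ρ, fun j => ?_⟩
  rw [← hρ]
  simp [crossP]

lemma master_sub (q : ℕ) {n : ℕ} (D : Fin n → Fin n → ℝ) (h : IdIsMasterTour q D)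
    (S : Finset (Fin n)) (m : ℕ) (hS : S.card = m) (hm : 2*q+1 ≤ m) (π : Equiv.Perm (Fin m)) :
    stripeObj q (fun i j => D (S.orderEmbOfFin hS i) (S.orderEmbOfFin hS j)) (Equiv.refl _) ≤
    stripeObj q (fun i j => D (S.orderEmbOfFin hS i) (S.orderEmbOfFin hS j)) π := by
  subst hS
  exact h S hm π

/-- Theorem 4.1: for `q ≥ 1` and a symmetric `n×n` matrix `D` with `n ≥ 2q+2`, the
identity permutation is a master tour for the `q`-stripe TSP on `D` if and only if
`D` is a `q`-Kalmanson matrix. -/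
theorem id_masterTour_iff_qKalmanson (q n : ℕ) (hq : 1 ≤ q) (hn : 2*q+2 ≤ n)
    (D : Fin n → Fin n → ℝ) (hsymm : ∀ i j, D i j = D j i) :
    IdIsMasterTour q D ↔ qKalmanson q D := by
  constructor
  · intro hM f hf σ h1 h2
    obtain ⟨ρ, hρ⟩ := invol_conj q σ h1 h2
    have hS : (Finset.univ.image f).card = 2*q+2 := by
      rw [Finset.card_image_of_injective _ hf.injective]; simp
    have hfe : f = (Finset.univ.image f).orderEmbOfFin hS :=
      Finset.orderEmbOfFin_unique hS (fun x => Finset.mem_image_of_mem _ (Finset.mem_univ x)) hf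
    have key := master_sub q D hM _ _ hS (by omega) ρ
    rw [← hfe] at key
    have hs : ∀ i j, D (f i) (f j) = D (f j) (f i) := fun _ _ => hsymm _ _
    rw [obj_fin, obj_fin] at key
    have a1 := obj_even _ (extM_symm (fun i j => D (f i) (f j)) hs) q (extP ρ) (extP_lt _) (extP_inj _)
    have a2 := obj_even _ (extM_symm (fun i j => D (f i) (f j)) hs) q (extP (Equiv.refl _))
      (extP_lt _) (extP_inj _)
    rw [lay_fin] at a1 a2
    have e1 : ∑ j, D (f j) (f (σ j)) = ∑ j, D (f (ρ j)) (f (ρ (finShift j (q+1)))) := by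
      rw [← Equiv.sum_comp ρ]
      refine Finset.sum_congr rfl fun j _ => ?_
      rw [hρ]; rfl
    have e2 : ∑ j, D (f j) (f (crossShift q j))
        = ∑ j : Fin (2*q+2), D (f (Equiv.refl _ j)) (f (Equiv.refl _ (finShift j (q+1)))) := rfl
    rw [e1, e2]
    linarith
  · intro hK S hS π
    rw [obj_fin, obj_fin, extP_refl]
    have K := kal_to_nat q D hsymm hK (S.orderEmbOfFin rfl) (S.orderEmbOfFin rfl).strictMono
    exact main_nat _ (extM_symm _ fun _ _ => hsymm _ _) q S.card K S.card hS le_rfl _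
      (extP_lt _) (extP_inj _)
end

section
/- (Supnick) Let D be a symmetric n×n Monge matrix. Then the permutation σ that first traverses the odd cities in increasing order and then traverses the even cities in decreasing order, i.e. σ = ⟨1,3,5,7,…,8,6,4,2⟩ (formally σ(i) = 2i−1 for 1 ≤ i ≤ ⌈n/2⌉ and σ(i) = 2(n−i+1) for ⌈n/2⌉ < i ≤ n), is an optimal TSP tour: Σ_{i=1}^{n} d(σ(i),σ(i+1)) ≤ Σ_{i=1}^{n} d(π(i),π(i+1)) for every permutation π of {1,…,n}, where indices are taken cyclically modulo n. -/
/-- The TSP tour length `∑_{i=1}^{n} d(π(i), π(i+1))`, indices cyclically modulo `n`. -/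
noncomputable def tourLen {n : ℕ} (D : Fin n → Fin n → ℝ) (π : Equiv.Perm (Fin n)) : ℝ :=
  ∑ i : Fin n, D (π i) (π (finShift i 1))

/-- `D` is a Monge matrix: `d(i,j) + d(r,s) ≤ d(i,s) + d(r,j)` for all `i < r`, `j < s`. -/
def MongeMat {n : ℕ} (D : Fin n → Fin n → ℝ) : Prop :=
  ∀ i r j s : Fin n, i < r → j < s → D i j + D r s ≤ D i s + D r j

open Finset

lemma finShift_one_val {n : ℕ} (i : Fin n) :
    (finShift i 1).val = if i.val + 1 < n then i.val + 1 else 0 := by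
  unfold finShift
  have := i.isLt
  split_ifs with h
  · simp [Nat.mod_eq_of_lt h]
  · have : i.val + 1 = n := by omega
    simp [this]

lemma finShift_one_inj {n : ℕ} : Function.Injective (fun i : Fin n => finShift i 1) := by
  intro i j h
  have h1 := congrArg Fin.val h
  simp only [finShift_one_val] at h1
  apply Fin.ext
  have := i.isLt
  have := j.isLt
  split_ifs at h1 <;> omega

/-- A nonempty set of positions closed under the cyclic successor is everything. -/
lemma closed_all {n : ℕ} (p : Fin n → Prop) (i0 : Fin n) (h0 : p i0)
    (hs : ∀ i, p i → p (finShift i 1)) (j : Fin n) : p j := by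
  have key : ∀ m : ℕ, p (finShift i0 m) := by
    intro m
    induction m with
    | zero =>
      have : finShift i0 0 = i0 := by
        apply Fin.ext
        simp [finShift, Nat.mod_eq_of_lt i0.isLt]
      rwa [this]
    | succ m ih =>
      have : finShift i0 (m+1) = finShift (finShift i0 m) 1 := by
        apply Fin.ext
        simp [finShift, Nat.add_assoc]
      rw [this]
      exact hs _ ih
  have := key (n - i0.val + j.val)
  have e : finShift i0 (n - i0.val + j.val) = j := by
    apply Fin.ext
    have h1 := i0.isLt
    have : i0.val + (n - i0.val + j.val) = j.val + n := by omega
    simp [finShift, this, Nat.mod_eq_of_lt j.isLt]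
  rwa [e] at this

/-- Edges jumping up from `≤ k` to `> l`. -/
def upE {n : ℕ} (π : Equiv.Perm (Fin n)) (k l : ℕ) : Finset (Fin n) :=
  univ.filter (fun i => (π i).val ≤ k ∧ l < (π (finShift i 1)).val)

/-- Edges jumping down from `> l` to `≤ k`. -/
def downE {n : ℕ} (π : Equiv.Perm (Fin n)) (k l : ℕ) : Finset (Fin n) :=
  univ.filter (fun i => l < (π i).val ∧ (π (finShift i 1)).val ≤ k)

/-- Edges with tail `> k` and head `> l`. -/
noncomputable def cntN {n : ℕ} (π : Equiv.Perm (Fin n)) (k l : ℕ) : ℝ :=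
  ∑ i : Fin n, (if k < (π i).val ∧ l < (π (finShift i 1)).val then 1 else 0)

lemma sum_shift {n : ℕ} (π : Equiv.Perm (Fin n)) (f : Fin n → ℝ) :
    ∑ i, f (π (finShift i 1)) = ∑ i, f i := by
  have hb : Function.Bijective (fun i : Fin n => finShift i 1) :=
    Finite.injective_iff_bijective.mp finShift_one_inj
  have := Equiv.sum_comp ((Equiv.ofBijective _ hb).trans π) f
  simpa using this

lemma cntN_up {n : ℕ} (π : Equiv.Perm (Fin n)) (k l : ℕ) :
    cntN π k l + (upE π k l).card = ∑ x : Fin n, (if l < x.val then (1:ℝ) else 0) := by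
  rw [← sum_shift π, cntN, upE, card_filter]
  push_cast
  rw [← sum_add_distrib]
  refine sum_congr rfl fun i _ => ?_
  split_ifs <;> first | omega | simp

lemma cntN_down {n : ℕ} (π : Equiv.Perm (Fin n)) (k l : ℕ) :
    cntN π l k + (downE π k l).card = ∑ x : Fin n, (if l < x.val then (1:ℝ) else 0) := by
  rw [← Equiv.sum_comp π, cntN, downE, card_filter]
  push_cast
  rw [← sum_add_distrib]
  refine sum_congr rfl fun i _ => ?_
  split_ifs <;> first | omega | simp

lemma exists_up {n : ℕ} (π : Equiv.Perm (Fin n)) (k : ℕ) (hk : k + 1 < n) :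
    ∃ i, (π i).val ≤ k ∧ k < (π (finShift i 1)).val := by
  by_contra! h
  have := closed_all (fun i => (π i).val ≤ k) (π.symm ⟨0, by omega⟩) (by simp) h
    (π.symm ⟨k+1, hk⟩)
  simp at this

lemma exists_down {n : ℕ} (π : Equiv.Perm (Fin n)) (k : ℕ) (hk : k + 1 < n) :
    ∃ i, k < (π i).val ∧ (π (finShift i 1)).val ≤ k := by
  by_contra! h
  have := closed_all (fun i => k < (π i).val) (π.symm ⟨k+1, hk⟩) (by simp) h
    (π.symm ⟨0, by omega⟩)
  simp at this

lemma exists_jump {n : ℕ} (π : Equiv.Perm (Fin n)) (k : ℕ) (hk : k + 2 < n) :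
    (∃ i, (π i).val ≤ k ∧ k + 1 < (π (finShift i 1)).val) ∨
    (∃ i, k + 1 < (π i).val ∧ (π (finShift i 1)).val ≤ k) := by
  by_contra! h
  obtain ⟨h1, h2⟩ := h
  obtain ⟨x, hx⟩ : ∃ x, (π x).val = k + 1 := ⟨π.symm ⟨k+1, by omega⟩, by simp⟩
  have ux : ∀ i, (π i).val = k + 1 → i = x := by
    intro i hi
    apply π.injective
    apply Fin.ext
    omega
  by_cases hc : (π (finShift x 1)).val ≤ k + 1
  · have := closed_all (fun i => (π i).val ≤ k + 1) x (by omega) (by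
      intro i hi
      by_cases he : (π i).val = k + 1
      · rw [ux i he]; exact hc
      · exact h1 i (by omega)) (π.symm ⟨k+2, hk⟩)
    simp at this
  · have := closed_all (fun i => k + 1 ≤ (π i).val) x (by omega) (by
      intro i hi
      by_cases he : (π i).val = k + 1
      · rw [ux i he]; omega
      · exact h2 i (by omega)) (π.symm ⟨0, by omega⟩)
    simp at this

lemma lower_bound {n : ℕ} (π : Equiv.Perm (Fin n)) (k l : ℕ) (hkl : k ≤ l) (hl : l + 1 < n) :
    2 - (l - k) ≤ (upE π k l).card + (downE π k l).card := by
  rcases (by omega : l = k ∨ l = k + 1 ∨ k + 2 ≤ l) with rfl | rfl | h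
  · obtain ⟨i, hi⟩ := exists_up π l hl
    obtain ⟨j, hj⟩ := exists_down π l hl
    have h1 : 0 < (upE π l l).card := card_pos.mpr ⟨i, by simpa [upE] using hi⟩
    have h2 : 0 < (downE π l l).card := card_pos.mpr ⟨j, by simpa [downE] using hj⟩
    omega
  · rcases exists_jump π k (by omega) with ⟨i, hi⟩ | ⟨i, hi⟩
    · have h1 : 0 < (upE π k (k+1)).card := card_pos.mpr ⟨i, by simpa [upE] using hi⟩
      omega
    · have h1 : 0 < (downE π k (k+1)).card := card_pos.mpr ⟨i, by simpa [downE] using hi⟩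
      omega
  · omega

lemma upper_bound {n : ℕ} (σ : Equiv.Perm (Fin n))
    (hσ : ∀ i : Fin n, (σ i).val =
      if i.val < (n+1)/2 then 2*i.val else 2*(n-1-i.val)+1)
    (k l : ℕ) (hkl : k ≤ l) (hl : l + 1 < n) :
    (upE σ k l).card + (downE σ k l).card ≤ 2 - (l - k) := by
  have hu : ∀ i ∈ upE σ k l, 2 * i.val ≤ k ∧ l < 2 * i.val + 2 := by
    intro i hi
    simp only [upE, mem_filter, mem_univ, true_and, hσ, finShift_one_val] at hi
    have := i.isLt
    split_ifs at hi <;> omega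
  have hd : ∀ i ∈ downE σ k l, l + 2 * i.val + 1 < 2 * n ∧ 2 * n ≤ k + 2 * i.val + 3 := by
    intro i hi
    simp only [downE, mem_filter, mem_univ, true_and, hσ, finShift_one_val] at hi
    have := i.isLt
    split_ifs at hi <;> omega
  have cu : (upE σ k l).card ≤ 1 := card_le_one.mpr fun a ha b hb => by
    have := hu a ha
    have := hu b hb
    apply Fin.ext
    omega
  have cd : (downE σ k l).card ≤ 1 := card_le_one.mpr fun a ha b hb => by
    have := hd a ha
    have := hd b hb
    apply Fin.ext
    omega
  rcases (by omega : l = k ∨ l = k + 1 ∨ k + 2 ≤ l) with rfl | rfl | h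
  · omega
  · rcases Nat.even_or_odd' k with ⟨c, rfl | rfl⟩
    · have : downE σ (2*c) (2*c+1) = ∅ := eq_empty_of_forall_notMem fun i hi => by
        have := hd i hi
        omega
      rw [this, card_empty]
      omega
    · have : upE σ (2*c+1) (2*c+1+1) = ∅ := eq_empty_of_forall_notMem fun i hi => by
        have := hu i hi
        omega
      rw [this, card_empty]
      omega
  · have e1 : downE σ k l = ∅ := eq_empty_of_forall_notMem fun i hi => by
      have := hd i hi
      omega
    have e2 : upE σ k l = ∅ := eq_empty_of_forall_notMem fun i hi => by
      have := hu i hi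
      omega
    simp [e1, e2]

lemma cnt_compare {n : ℕ} (σ : Equiv.Perm (Fin n))
    (hσ : ∀ i : Fin n, (σ i).val =
      if i.val < (n+1)/2 then 2*i.val else 2*(n-1-i.val)+1)
    (π : Equiv.Perm (Fin n)) (k l : ℕ) (hk : k + 1 < n) (hl : l + 1 < n) :
    cntN π k l + cntN π l k ≤ cntN σ k l + cntN σ l k := by
  wlog hkl : k ≤ l generalizing k l
  · have := this l k hl hk (by omega)
    linarith
  have h := (upper_bound σ hσ k l hkl hl).trans (lower_bound π k l hkl hl)
  have h' : ((upE σ k l).card : ℝ) + (downE σ k l).card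
      ≤ (upE π k l).card + (downE π k l).card := by exact_mod_cast h
  linarith [cntN_up σ k l, cntN_up π k l, cntN_down σ k l, cntN_down π k l]

/-- Density of a matrix on ℕ. -/
def mdens (d : ℕ → ℕ → ℝ) (k l : ℕ) : ℝ :=
  d k (l+1) + d (k+1) l - d k l - d (k+1) (l+1)

lemma dens_sum (d : ℕ → ℕ → ℝ) (i j : ℕ) :
    ∑ k ∈ range i, ∑ l ∈ range j, mdens d k l = d i 0 + d 0 j - d 0 0 - d i j := by
  have h1 : ∀ k, ∑ l ∈ range j, mdens d k l = (d (k+1) 0 - d k 0) - (d (k+1) j - d k j) := by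
    intro k
    have := sum_range_sub (fun l => d k l - d (k+1) l) j
    rw [show (d (k+1) 0 - d k 0) - (d (k+1) j - d k j)
      = d k j - d (k+1) j - (d k 0 - d (k+1) 0) by ring, ← this]
    refine sum_congr rfl fun l _ => ?_
    unfold mdens
    ring
  simp only [h1]
  rw [sum_sub_distrib, sum_range_sub (fun k => d k 0), sum_range_sub (fun k => d k j)]
  ring

lemma dens_sum' (d : ℕ → ℕ → ℝ) (n i j : ℕ) (hi : i < n) (hj : j < n) :
    d i j = d i 0 + d 0 j - d 0 0 -
      ∑ k ∈ range (n-1), ∑ l ∈ range (n-1), mdens d k l * (if k < i ∧ l < j then 1 else 0) := by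
  have hr : ∀ (m : ℕ), m < n → ∀ f : ℕ → ℝ,
      ∑ k ∈ range (n-1), (if k < m then f k else 0) = ∑ k ∈ range m, f k := by
    intro m hm f
    rw [← sum_filter]
    congr 1
    ext x
    simp only [mem_filter, mem_range]
    omega
  have : ∑ k ∈ range (n-1), ∑ l ∈ range (n-1), mdens d k l * (if k < i ∧ l < j then 1 else 0)
      = ∑ k ∈ range i, ∑ l ∈ range j, mdens d k l := by
    rw [← hr i hi]
    refine sum_congr rfl fun k _ => ?_
    split_ifs with h
    · rw [← hr j hj]
      simp [h]
    · simp [h]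
  rw [this, dens_sum]
  ring

lemma tour_formula {n : ℕ} (D : Fin n → Fin n → ℝ) (d : ℕ → ℕ → ℝ)
    (hd : ∀ i j : Fin n, D i j = d i.val j.val) (π : Equiv.Perm (Fin n)) :
    tourLen D π = (∑ x : Fin n, d x.val 0) + (∑ x : Fin n, d 0 x.val) - n * d 0 0 -
      ∑ k ∈ range (n-1), ∑ l ∈ range (n-1), mdens d k l * cntN π k l := by
  have h : ∀ i : Fin n, D (π i) (π (finShift i 1)) = _ := fun i =>
    (hd _ _).trans (dens_sum' d n _ _ (π i).isLt (π (finShift i 1)).isLt)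
  unfold tourLen
  simp only [h]
  rw [sum_sub_distrib, sum_sub_distrib, sum_add_distrib,
    Equiv.sum_comp π (fun x : Fin n => d x.val 0), sum_shift π (fun x : Fin n => d 0 x.val)]
  congr 1
  · simp
  · rw [sum_comm]
    refine sum_congr rfl fun k _ => ?_
    rw [sum_comm]
    refine sum_congr rfl fun l _ => ?_
    rw [cntN, mul_sum]

/-- Theorem (Supnick): for a symmetric Monge matrix, the permutation `σ` that first
traverses the odd cities in increasing order and then the even cities in decreasing
order (in 0-based terms: `σ(i) = 2i` for `i < ⌈n/2⌉` and `σ(i) = 2(n−1−i)+1`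
otherwise) is an optimal TSP tour. -/
theorem supnick_tsp_monge (n : ℕ)
    (D : Fin n → Fin n → ℝ) (hsymm : ∀ i j, D i j = D j i) (hM : MongeMat D)
    (σ : Equiv.Perm (Fin n))
    (hσ : ∀ i : Fin n, (σ i).val =
      if i.val < (n+1)/2 then 2*i.val else 2*(n-1-i.val)+1)
    (π : Equiv.Perm (Fin n)) :
    tourLen D σ ≤ tourLen D π := by
  set d : ℕ → ℕ → ℝ := fun i j =>
    if h : i < n ∧ j < n then D ⟨i, h.1⟩ ⟨j, h.2⟩ else 0 with hd
  have hdD : ∀ i j : Fin n, D i j = d i.val j.val := by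
    intro i j
    simp [hd]
  have hds : ∀ i j, d i j = d j i := by
    intro i j
    simp only [hd]
    by_cases h : i < n ∧ j < n
    · rw [dif_pos h, dif_pos h.symm, hsymm]
    · rw [dif_neg h, dif_neg (fun h' => h h'.symm)]
  have hms : ∀ k l, mdens d k l = mdens d l k := by
    intro k l
    unfold mdens
    rw [hds k (l+1), hds (k+1) l, hds k l, hds (k+1) (l+1)]
    ring
  have hm : ∀ k l, k + 1 < n → l + 1 < n → 0 ≤ mdens d k l := by
    intro k l hk hl
    have := hM ⟨k, by omega⟩ ⟨k+1, hk⟩ ⟨l, by omega⟩ ⟨l+1, hl⟩ (by simp) (by simp)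
    simp only [hdD] at this
    unfold mdens
    linarith
  rw [tour_formula D d hdD σ, tour_formula D d hdD π]
  have sy : ∀ τ : Equiv.Perm (Fin n),
      2 * ∑ k ∈ range (n-1), ∑ l ∈ range (n-1), mdens d k l * cntN τ k l =
      ∑ k ∈ range (n-1), ∑ l ∈ range (n-1), mdens d k l * (cntN τ k l + cntN τ l k) := by
    intro τ
    have e : ∑ k ∈ range (n-1), ∑ l ∈ range (n-1), mdens d k l * cntN τ l k =
        ∑ k ∈ range (n-1), ∑ l ∈ range (n-1), mdens d k l * cntN τ k l := by
      rw [sum_comm]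
      refine sum_congr rfl fun k _ => sum_congr rfl fun l _ => ?_
      rw [hms]
    simp only [mul_add, sum_add_distrib]
    rw [e]
    ring
  have key : ∑ k ∈ range (n-1), ∑ l ∈ range (n-1), mdens d k l * (cntN π k l + cntN π l k) ≤
      ∑ k ∈ range (n-1), ∑ l ∈ range (n-1), mdens d k l * (cntN σ k l + cntN σ l k) := by
    refine sum_le_sum fun k hk => sum_le_sum fun l hl => ?_
    rw [mem_range] at hk hl
    exact mul_le_mul_of_nonneg_left (cnt_compare σ hσ π k l (by omega) (by omega))
      (hm k l (by omega) (by omega))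
  rw [← sy, ← sy] at key
  linarith
end
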